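/- Let ζ be a primitive aperiodic binary substitution of constant length q ≥ 2 with ζ(0) starting with 0 and x = ζ^∞(0). Then for every integer ℓ ≥ 1 the asymptotic entropy of line lengths ENT_ℓ(x,∞,ε₀) = lim_{n→∞} ENT_ℓ(x,n,ε₀) exists and ENT_ℓ(x,∞,ε₀) = log(Σ_{l≥ℓ} dens(K_l)) − (Σ_{l≥ℓ} dens(K_l))^{-1} · Σ_{l≥ℓ} dens(K_l)·log dens(K_l) > 0 (with the convention 0·log 0 = 0). -/

import Mathlib

open Filter Topology MeasureTheory

namespace RQA

/-- The standard metric on symbolic sequences over an alphabet `α`: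
`ρ(x,y) = 2^{-min{i : x i ≠ y i}}` for `x ≠ y` and `ρ(x,x) = 0`. -/
noncomputable def seqDist {α : Type*} (x y : ℕ → α) : ℝ :=
  haveI := Classical.propDecidable (x = y)
  if x = y then 0 else (2 : ℝ) ^ (-((sInf {i : ℕ | x i ≠ y i} : ℕ) : ℤ))

/-- The (one-sided) shift on sequences. -/
def shift {α : Type*} (x : ℕ → α) : ℕ → α := fun i => x (i + 1)

/-- The embedded sequence `x^{(m)}`, a sequence over the alphabet `α^m`. -/
def embedSeq {α : Type*} (m : ℕ) (x : ℕ → α) : ℕ → (Fin m → α) :=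
  fun j t => x (j + (t : ℕ))

section RQAdefs

variable {X : Type*} (d : X → X → ℝ) (f : X → X) (x : X)

/-- The entry of the recurrence plot at `(i,j)` equals `1`. -/
def RPone (ε : ℝ) (i j : ℕ) : Prop := d (f^[i] x) (f^[j] x) ≤ ε

/-- `(i, j, l)` is a diagonal line in the recurrence plot `RP(x, n, ε)`. -/
def IsLine (n : ℕ) (ε : ℝ) (i j l : ℕ) : Prop :=
  1 ≤ l ∧ i + l ≤ n ∧ j + l ≤ n ∧ i ≠ j ∧
  (∀ h, h < l → RPone d f x ε (i + h) (j + h)) ∧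
  (0 < i → 0 < j → ¬ RPone d f x ε (i - 1) (j - 1)) ∧
  (max i j + l < n → ¬ RPone d f x ε (i + l) (j + l))

/-- `N_l(x, n, ε)`: the number of diagonal lines of length exactly `l`. -/
noncomputable def Nlines (n : ℕ) (ε : ℝ) (l : ℕ) : ℕ :=
  Set.ncard {p : ℕ × ℕ | IsLine d f x n ε p.1 p.2 l}

/-- `P_l(x, n, ε) = N_l/(n² − n)`. -/
noncomputable def Pline (n : ℕ) (ε : ℝ) (l : ℕ) : ℝ :=
  (Nlines d f x n ε l : ℝ) / ((n : ℝ) ^ 2 - (n : ℝ))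

/-- `P≥_ℓ(x, n, ε) = Σ_{l ≥ ℓ} P_l`. -/
noncomputable def PlineGe (n : ℕ) (ε : ℝ) (ℓ : ℕ) : ℝ :=
  ∑' k : ℕ, Pline d f x n ε (ℓ + k)

/-- The recurrence rate `RR_ℓ(x, n, ε) = Σ_{l ≥ ℓ} l · P_l`. -/
noncomputable def RRate (n : ℕ) (ε : ℝ) (ℓ : ℕ) : ℝ :=
  ∑' k : ℕ, ((ℓ + k : ℕ) : ℝ) * Pline d f x n ε (ℓ + k)

/-- The determinism `DET_ℓ(x, n, ε) = RR_ℓ/RR_1`. -/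
noncomputable def DETrm (n : ℕ) (ε : ℝ) (ℓ : ℕ) : ℝ :=
  RRate d f x n ε ℓ / RRate d f x n ε 1

/-- The average line length `L_ℓ(x, n, ε) = RR_ℓ/P≥_ℓ`. -/
noncomputable def LAvg (n : ℕ) (ε : ℝ) (ℓ : ℕ) : ℝ :=
  RRate d f x n ε ℓ / PlineGe d f x n ε ℓ

/-- The entropy of line lengths
`ENT_ℓ(x, n, ε) = log P≥_ℓ − (1/P≥_ℓ)·Σ_{l≥ℓ} P_l · log P_l` (with `0·log 0 = 0`). -/
noncomputable def ENTln (n : ℕ) (ε : ℝ) (ℓ : ℕ) : ℝ :=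
  Real.log (PlineGe d f x n ε ℓ) -
    (PlineGe d f x n ε ℓ)⁻¹ *
      ∑' k : ℕ, Pline d f x n ε (ℓ + k) * Real.log (Pline d f x n ε (ℓ + k))

/-- The correlation sum
`C_ℓ(x, n, ε) = n^{-2}·#{(i,j) ∈ [0,n)² : d_ℓ(f^i x, f^j x) ≤ ε}`,
where `d_ℓ` is the Bowen metric. -/
noncomputable def corrSum (ℓ n : ℕ) (ε : ℝ) : ℝ :=
  (Set.ncard {p : ℕ × ℕ | p.1 < n ∧ p.2 < n ∧
      ∀ k, k < ℓ → d (f^[p.1 + k] x) (f^[p.2 + k] x) ≤ ε} : ℝ) / (n : ℝ) ^ 2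

end RQAdefs

/-- The extension of a substitution to a morphism of the free monoid of finite words. -/
def substWord (ζ : Bool → List Bool) : List Bool → List Bool :=
  fun w => w.foldr (fun a r => ζ a ++ r) []

/-- `ζ` is a (binary) substitution of constant length `q ≥ 2`. -/
def IsConstLenSubst (ζ : Bool → List Bool) (q : ℕ) : Prop :=
  2 ≤ q ∧ ∀ a : Bool, (ζ a).length = q

/-- The language `L_ζ`: subwords of the words `ζ^k(a)`, `a ∈ A`, `k ≥ 1`. -/
def substLang (ζ : Bool → List Bool) : Set (List Bool) :=
  {w | ∃ a : Bool, ∃ k : ℕ, 1 ≤ k ∧ w <:+: (substWord ζ)^[k] [a]}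

/-- The substitution subshift `X_ζ`. -/
def SubstShift (ζ : Bool → List Bool) : Set (ℕ → Bool) :=
  {y | ∀ n : ℕ, (List.ofFn fun t : Fin n => y (t : ℕ)) ∈ substLang ζ}

/-- `ζ` is primitive. -/
def IsPrimitive (ζ : Bool → List Bool) : Prop :=
  ∃ k : ℕ, 1 ≤ k ∧ ∀ a b : Bool, b ∈ (substWord ζ)^[k] [a]

/-- `ζ` is aperiodic: `X_ζ` contains a non-periodic sequence. -/
def IsAperiodic (ζ : Bool → List Bool) : Prop :=
  ∃ y ∈ SubstShift ζ, ∀ p : ℕ, 1 ≤ p → ∃ i : ℕ, y (i + p) ≠ y i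

/-- The action of a constant length-`q` substitution on infinite sequences. -/
def substSeq (ζ : Bool → List Bool) (q : ℕ) (x : ℕ → Bool) : ℕ → Bool :=
  fun i => (ζ (x (i / q))).getD (i % q) false

/-- `(i, j, l)` is a line in the infinite symbolic recurrence plot `RP(x, ∞, ε₀)`. -/
def IsInfLine (x : ℕ → Bool) (i j l : ℕ) : Prop :=
  1 ≤ l ∧ i ≠ j ∧ (∀ h, h < l → x (i + h) = x (j + h)) ∧
  (0 < i → 0 < j → x (i - 1) ≠ x (j - 1)) ∧ x (i + l) ≠ x (j + l)

/-- `K_l`: the set of starting points `(i,j)`, `i,j ≥ 1`, of inner lines of length `l`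
in the infinite symbolic recurrence plot. -/
def Kset (x : ℕ → Bool) (l : ℕ) : Set (ℕ × ℕ) :=
  {p | 1 ≤ p.1 ∧ 1 ≤ p.2 ∧ IsInfLine x p.1 p.2 l}

/-- `#(M ∩ [0,n)²)/n²`. -/
noncomputable def densCount (M : Set (ℕ × ℕ)) (n : ℕ) : ℝ :=
  (Set.ncard (M ∩ {p : ℕ × ℕ | p.1 < n ∧ p.2 < n}) : ℝ) / (n : ℝ) ^ 2

/-- `M ⊆ ℕ²` has asymptotic density `a`. -/
def HasDens (M : Set (ℕ × ℕ)) (a : ℝ) : Prop :=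
  Tendsto (densCount M) atTop (𝓝 a)

/-- `δ_l(n) = #(K_l ∩ [1,n)²)/(n² − n)`. -/
noncomputable def deltaK (x : ℕ → Bool) (l n : ℕ) : ℝ :=
  (Set.ncard (Kset x l ∩ {p : ℕ × ℕ | p.1 < n ∧ p.2 < n}) : ℝ) / ((n : ℝ) ^ 2 - (n : ℝ))

/-- `M` is a minimal subset of the subshift `Y`. -/
def IsMinimalSubset (Y M : Set (ℕ → Bool)) : Prop :=
  M ⊆ Y ∧ M.Nonempty ∧ IsClosed M ∧ (∀ z ∈ M, shift z ∈ M) ∧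
  ∀ M' : Set (ℕ → Bool), M' ⊆ M → M'.Nonempty → IsClosed M' →
    (∀ z ∈ M', shift z ∈ M') → M' = M

end RQA

open RQA

/-!
In a fixed point `x` of a primitive substitution of constant length `Q` (a power of `q`), every
block of level `k + 1` splits into `Q` blocks of level `k`, one of which is a copy of the initial
block. Hence the number of occurrences of a word in a block of level `k` oscillates by at most
`O(k (Q - 1) ^ k)`, which is `o(Q ^ k)`, and every word of `x` has a positive frequency. An inner
line of length `l` at `(i, j)` is visible in the two words of length `l + 2` starting at `i - 1` and
`j - 1`, so `dens(K_l)` exists as a finite sum of products of word frequencies, and `P_l` tends to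
it because only `O(n)` lines of length `l` meet the boundary of the plot.

To pass to the limit in the sums over `l ≥ ℓ`, note that the lines of a plot are disjoint, so
`∑ l P_l ≤ 1` uniformly in `n`. This makes the `P_l` uniformly tight, and, since
`√l (-p log p) ≤ 4 l p + l ^ (-3/2)`, also the terms `-P_l log P_l`. The limit is positive because
aperiodicity provides arbitrarily long inner lines, hence two lengths of positive density.
-/

namespace RQA

/-! ### Frequencies -/

section Frequency

variable {α β : Type*}

/-- The word of length `m` read off the sequence `x` from position `i` on. -/
def window (x : ℕ → α) (m i : ℕ) : Fin m → α := fun h => x (i + h)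

/-- The sequence `f` takes the value `b` with asymptotic frequency `φ`. The frequency of a word
`w` of length `m` in `x` is the case `f = window x m`, `b = w`. -/
def HasFreq [DecidableEq β] (f : ℕ → β) (b : β) (φ : ℝ) : Prop :=
  Tendsto (fun n : ℕ => (Nat.count (f · = b) n : ℝ) / n) atTop (𝓝 φ)

/-- Every word has a frequency in `x`, and this frequency is positive if the word occurs in `x`.
For uniformly recurrent `x` this is strict ergodicity of the orbit closure of `x`. -/
def HasPosWordFreqs [DecidableEq α] (x : ℕ → α) : Prop :=
  ∀ (m : ℕ) (w : Fin m → α),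
    ∃ φ : ℝ, HasFreq (window x m) w φ ∧ ((∃ i, window x m i = w) → 0 < φ)

/-- The number of positions satisfying `P` in the block `[Q * t, Q * (t + 1))`. -/
def blockCount (P : ℕ → Prop) [DecidablePred P] (Q t : ℕ) : ℕ :=
  Nat.count (fun r => P (Q * t + r)) Q

lemma window_eq_window_iff {x : ℕ → α} {m i j : ℕ} :
    window x m i = window x m j ↔ ∀ h < m, x (i + h) = x (j + h) :=
  ⟨fun hij h hh => congrFun hij ⟨h, hh⟩, fun hij => funext fun h => hij h h.2⟩

section Count

variable (P : ℕ → Prop) [DecidablePred P]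

lemma count_mul_eq_sum_blockCount (Q n : ℕ) :
    Nat.count P (Q * n) = ∑ t ∈ Finset.range n, blockCount P Q t := by
  induction n with
  | zero => simp
  | succ n ih => rw [mul_add_one, Nat.count_add, Finset.sum_range_succ, ih, blockCount]

lemma blockCount_mul (Q R t : ℕ) :
    blockCount P (Q * R) t = ∑ r ∈ Finset.range R, blockCount P Q (R * t + r) := by
  unfold blockCount
  rw [count_mul_eq_sum_blockCount]
  simp only [blockCount, mul_add, mul_assoc, add_assoc]

lemma count_le_count_sub_add (n m : ℕ) : Nat.count P n ≤ Nat.count P (n - m) + m := by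
  calc Nat.count P n ≤ Nat.count P (n - m + m) := Nat.count_monotone P (by omega)
    _ ≤ Nat.count P (n - m) + m := by
      rw [Nat.count_add]
      exact Nat.add_le_add_left (Nat.count_le _) _

variable {P}

lemma abs_count_sub_le {Q : ℕ} (hQ : 0 < Q) {a ε : ℝ} (hε : 0 ≤ ε)
    (hblock : ∀ t, |blockCount P Q t - a| ≤ ε * Q) (n : ℕ) :
    |Nat.count P n - a / Q * n| ≤ ε * n + (Q + |a|) := by
  set t := n / Q
  set r := n % Q
  have hr : (r : ℝ) ≤ Q := by exact_mod_cast (Nat.mod_lt n hQ).le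
  have hQ' : (0 : ℝ) < Q := by exact_mod_cast hQ
  have hn : (n : ℝ) = Q * t + r := by exact_mod_cast (Nat.div_add_mod n Q).symm
  have hfull : |∑ s ∈ Finset.range t, (blockCount P Q s - a)| ≤ ε * Q * t := by
    calc _ ≤ ∑ s ∈ Finset.range t, |blockCount P Q s - a| := Finset.abs_sum_le_sum_abs _ _
      _ ≤ ∑ _s ∈ Finset.range t, ε * Q := Finset.sum_le_sum fun s _ => hblock s
      _ = ε * Q * t := by rw [Finset.sum_const, Finset.card_range, nsmul_eq_mul, mul_comm]
  have hrest : (Nat.count (fun k => P (Q * t + k)) r : ℝ) ≤ r := by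
    exact_mod_cast Nat.count_le _
  have hcorr : |a / Q * r| ≤ |a| := by
    rw [abs_mul, abs_div, abs_of_pos hQ', Nat.abs_cast, div_mul_eq_mul_div]
    exact div_le_of_le_mul₀ hQ'.le (abs_nonneg a) (by gcongr)
  have hsplit : Nat.count P n - a / Q * n = ∑ s ∈ Finset.range t, (blockCount P Q s - a) +
      Nat.count (fun k => P (Q * t + k)) r - a / Q * r := by
    conv_lhs => rw [← Nat.div_add_mod n Q, Nat.count_add, count_mul_eq_sum_blockCount]
    push_cast
    rw [Finset.sum_sub_distrib, Finset.sum_const, Finset.card_range, nsmul_eq_mul]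
    field_simp
    ring
  have hεr : 0 ≤ ε * r := by positivity
  rw [hsplit, abs_le]
  rw [abs_le] at hfull hcorr
  constructor <;> nlinarith [Nat.cast_nonneg (α := ℝ) (Nat.count (fun k => P (Q * t + k)) r)]

lemma exists_tendsto_count_div
    (hblock : ∀ ε > 0, ∃ Q > 0, ∃ a : ℝ, ∀ t, |blockCount P Q t - a| ≤ ε * Q) :
    ∃ φ : ℝ, Tendsto (fun n : ℕ => (Nat.count P n : ℝ) / n) atTop (𝓝 φ) := by
  refine cauchySeq_tendsto_of_complete (Metric.cauchySeq_iff.2 fun ε hε => ?_)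
  obtain ⟨Q, hQ, a, ha⟩ := hblock (ε / 4) (by positivity)
  have hsmall : ∀ᶠ n : ℕ in atTop, (Q + |a|) / n < ε / 4 :=
    (tendsto_const_div_atTop_nhds_zero_nat _).eventually_lt_const (by positivity)
  have hclose : ∀ᶠ n : ℕ in atTop, dist ((Nat.count P n : ℝ) / n) (a / Q) < ε / 2 := by
    filter_upwards [hsmall, eventually_gt_atTop 0] with n hn hpos
    have hn' : (0 : ℝ) < n := by exact_mod_cast hpos
    rw [div_lt_iff₀ hn'] at hn
    rw [Real.dist_eq, div_sub' hn'.ne', abs_div, abs_of_pos hn', div_lt_iff₀ hn', mul_comm (n : ℝ)]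
    linarith [abs_count_sub_le hQ (by positivity) ha n]
  obtain ⟨N, hN⟩ := eventually_atTop.1 hclose
  refine ⟨N, fun m hm n hn => ?_⟩
  linarith [dist_triangle_right ((Nat.count P m : ℝ) / m) (Nat.count P n / n) (a / Q),
    hN m hm, hN n hn]

lemma pos_of_tendsto_count_div {φ : ℝ}
    (hφ : Tendsto (fun n : ℕ => (Nat.count P n : ℝ) / n) atTop (𝓝 φ)) {G : ℕ}
    (hG : ∀ t, ∃ r < G, P (G * t + r)) : 0 < φ := by
  have hGpos : 0 < G := by
    obtain ⟨r, hr, -⟩ := hG 0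
    omega
  have hcount (n : ℕ) : n ≤ Nat.count P (G * n) := by
    rw [count_mul_eq_sum_blockCount]
    simpa using Finset.card_nsmul_le_sum (Finset.range n) (blockCount P G) 1
      fun t _ => Nat.one_le_iff_ne_zero.2 (Nat.count_ne_iff_exists.2 (hG t))
  have hlim := hφ.comp (tendsto_id.const_mul_atTop' hGpos)
  have hle : (1 : ℝ) / G ≤ φ := by
    refine ge_of_tendsto hlim ?_
    filter_upwards [eventually_gt_atTop 0] with n hn
    have hn' : (n : ℝ) ≤ Nat.count P (G * n) := by exact_mod_cast hcount n
    simp only [Function.comp_apply, id_eq, Nat.cast_mul]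
    rw [div_le_div_iff₀ (by positivity) (by positivity)]
    nlinarith
  exact lt_of_lt_of_le (by positivity) hle

end Count

lemma HasFreq.exists_ge_eq [DecidableEq β] {f : ℕ → β} {b : β} {φ : ℝ} (hf : HasFreq f b φ)
    (hφ : 0 < φ) (N : ℕ) : ∃ i, N ≤ i ∧ f i = b := by
  by_contra! hne
  have hcount (n : ℕ) : Nat.count (f · = b) n ≤ N := by
    calc _ ≤ Nat.count (f · = b) (N + n) := Nat.count_monotone _ (Nat.le_add_left n N)
      _ = Nat.count (f · = b) N := by
        rw [Nat.count_add, Nat.add_eq_left, Nat.count_iff_forall_not]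
        exact fun k _ => hne (N + k) (Nat.le_add_right N k)
      _ ≤ N := Nat.count_le _
  refine hφ.not_ge (le_of_tendsto_of_tendsto' hf (tendsto_const_div_atTop_nhds_zero_nat (N : ℝ))
    fun n => ?_)
  gcongr
  exact hcount n

end Frequency

/-! ### Word frequencies in fixed points of constant length substitutions -/

section BlockDetermined

variable {α : Type*} {x : ℕ → α} {Q : ℕ}

/-- `x` is a fixed point of some substitution of constant length `Q`: the letter `x t` determines
the block of `x` at `[Q * t, Q * (t + 1))`. -/
def IsBlockDetermined (x : ℕ → α) (Q : ℕ) : Prop :=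
  ∀ ⦃s t⦄, x s = x t → ∀ r < Q, x (Q * s + r) = x (Q * t + r)

lemma IsBlockDetermined.pow (hx : IsBlockDetermined x Q) (k : ℕ) :
    IsBlockDetermined x (Q ^ k) := by
  induction k with
  | zero =>
    intro s t hst r hr
    obtain rfl : r = 0 := by simpa using hr
    simpa using hst
  | succ k ih =>
    intro s t hst r hr
    have hQ : 0 < Q := Nat.pos_of_ne_zero fun h => by simp [h] at hr
    have hdigits (u : ℕ) : Q ^ (k + 1) * u + r = Q * (Q ^ k * u + r / Q) + r % Q := by
      conv_lhs => rw [← Nat.div_add_mod r Q]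
      ring
    rw [hdigits, hdigits]
    exact hx (ih hst _ (Nat.div_lt_of_lt_mul (by rwa [pow_succ'] at hr))) _ (Nat.mod_lt r hQ)

lemma IsBlockDetermined.exists_window_eq (hQ : 1 < Q) (hx : IsBlockDetermined x Q)
    (hrec : ∀ t, ∃ r < Q, x (Q * t + r) = x 0) (m i : ℕ) :
    ∃ G, ∀ t, ∃ r < G, window x m (G * t + r) = window x m i := by
  set N := i + m
  have hN : N < Q ^ N := Nat.lt_pow_self hQ
  refine ⟨Q ^ N * Q, fun t => ?_⟩
  obtain ⟨r, hr, hletter⟩ := hrec t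
  refine ⟨Q ^ N * r + i, ?_, window_eq_window_iff.2 fun h hh => ?_⟩
  · calc Q ^ N * r + i < Q ^ N * (r + 1) := by rw [mul_add_one]; omega
      _ ≤ Q ^ N * Q := Nat.mul_le_mul_left _ hr
  · calc x (Q ^ N * Q * t + (Q ^ N * r + i) + h) = x (Q ^ N * (Q * t + r) + (i + h)) := by ring_nf
      _ = x (Q ^ N * 0 + (i + h)) := hx.pow N hletter (i + h) (by omega)
      _ = x (i + h) := by rw [mul_zero, zero_add]

variable [DecidableEq α]

lemma IsBlockDetermined.blockCount_le (hx : IsBlockDetermined x Q) {m : ℕ} (w : Fin m → α)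
    {s t : ℕ} (hst : x s = x t) :
    blockCount (window x m · = w) Q s ≤ blockCount (window x m · = w) Q t + m := by
  have hinner : Nat.count (fun r => window x m (Q * s + r) = w) (Q - m) ≤
      Nat.count (fun r => window x m (Q * t + r) = w) (Q - m) := by
    refine Nat.count_mono_left fun r hr hw => ?_
    rw [← hw, window_eq_window_iff]
    intro h hh
    rw [add_assoc, add_assoc]
    exact (hx hst (r + h) (by omega)).symm
  calc _ ≤ _ := count_le_count_sub_add _ Q m
    _ ≤ _ := Nat.add_le_add_right (hinner.trans (Nat.count_monotone _ (Nat.sub_le Q m))) m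

lemma sum_range_mem_Icc_of_abs_sub_le {b : ℕ → ℝ} {Q r : ℕ} (hr : r < Q) {u D v m : ℝ}
    (hb : ∀ s, b s ∈ Set.Icc u (u + D)) (hv : |b r - v| ≤ m) :
    ∑ s ∈ Finset.range Q, b s ∈
      Set.Icc (v - m + (Q - 1) * u) (v - m + (Q - 1) * u + ((Q - 1) * D + 2 * m)) := by
  have hmem : r ∈ Finset.range Q := Finset.mem_range.2 hr
  have hcard : (((Finset.range Q).erase r).card : ℝ) = Q - 1 := by
    rw [Finset.card_erase_of_mem hmem, Finset.card_range, Nat.cast_pred (by omega)]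
  have hlower := Finset.card_nsmul_le_sum ((Finset.range Q).erase r) b u fun s _ => (hb s).1
  have hupper := Finset.sum_le_card_nsmul ((Finset.range Q).erase r) b (u + D) fun s _ => (hb s).2
  rw [nsmul_eq_mul, hcard] at hlower hupper
  rw [abs_le] at hv
  rw [← Finset.add_sum_erase _ b hmem]
  constructor <;> linarith [hv.1, hv.2]

/-- One of the `Q` subblocks of every block carries the letter `x 0`, so its count is known up to
`m`; only the remaining `Q - 1` subblocks contribute to the oscillation. -/
lemma IsBlockDetermined.exists_blockCount_mem_Icc (hQ : 1 < Q) (hx : IsBlockDetermined x Q)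
    (hrec : ∀ t, ∃ r < Q, x (Q * t + r) = x 0) {m : ℕ} (w : Fin m → α) (k : ℕ) :
    ∃ u : ℝ, ∀ t, (blockCount (window x m · = w) (Q ^ k) t : ℝ) ∈
      Set.Icc u (u + (1 + 2 * m * k) * ((Q : ℝ) - 1) ^ k) := by
  have hQ' : (1 : ℝ) ≤ Q - 1 := by
    have : (2 : ℝ) ≤ Q := by exact_mod_cast hQ
    linarith
  induction k with
  | zero =>
    refine ⟨0, fun t => ⟨Nat.cast_nonneg _, ?_⟩⟩
    simpa [blockCount] using Nat.count_le (fun r => window x m (t + r) = w) (n := 1)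
  | succ k ih =>
    obtain ⟨u, hu⟩ := ih
    have hknown {s : ℕ} (hs : x s = x 0) : |(blockCount (window x m · = w) (Q ^ k) s : ℝ) -
        blockCount (window x m · = w) (Q ^ k) 0| ≤ m := by
      rw [abs_sub_le_iff, sub_le_iff_le_add', sub_le_iff_le_add']
      exact ⟨by exact_mod_cast (hx.pow k).blockCount_le w hs,
        by exact_mod_cast (hx.pow k).blockCount_le w hs.symm⟩
    have hwidth : (Q - 1) * ((1 + 2 * m * k) * ((Q : ℝ) - 1) ^ k) + 2 * m ≤
        (1 + 2 * m * (k + 1 : ℕ)) * ((Q : ℝ) - 1) ^ (k + 1) := by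
      have hpow : 2 * (m : ℝ) ≤ 2 * m * ((Q : ℝ) - 1) ^ (k + 1) :=
        le_mul_of_one_le_right (by positivity) (one_le_pow₀ hQ')
      push_cast
      linear_combination hpow
    refine ⟨blockCount (window x m · = w) (Q ^ k) 0 - m + (Q - 1) * u,
      fun t => Set.Icc_subset_Icc_right (add_le_add_right hwidth _) ?_⟩
    obtain ⟨r, hr, hletter⟩ := hrec t
    rw [pow_succ, blockCount_mul, Nat.cast_sum]
    exact sum_range_mem_Icc_of_abs_sub_le hr (fun s => hu (Q * t + s)) (hknown hletter)

lemma exists_mul_pow_le {Q : ℝ} (hQ : 1 < Q) (m : ℝ) {ε : ℝ} (hε : 0 < ε) :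
    ∃ k : ℕ, (1 + 2 * m * k) * (Q - 1) ^ k ≤ ε * Q ^ k := by
  have hratio : (Q - 1) / Q < 1 := (div_lt_one (by linarith)).2 (by linarith)
  have hratio0 : 0 ≤ (Q - 1) / Q := div_nonneg (by linarith) (by linarith)
  have hlim : Tendsto (fun k : ℕ => ((Q - 1) / Q) ^ k + 2 * m * (k * ((Q - 1) / Q) ^ k)) atTop
      (𝓝 (0 + 2 * m * 0)) :=
    (tendsto_pow_atTop_nhds_zero_of_lt_one hratio0 hratio).add
      ((tendsto_self_mul_const_pow_of_lt_one hratio0 hratio).const_mul _)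
  obtain ⟨k, hk⟩ := (hlim.eventually_le_const (by simpa using hε)).exists
  refine ⟨k, ?_⟩
  have hQk : 0 < Q ^ k := by positivity
  rw [div_pow] at hk
  field_simp at hk
  linarith

lemma IsBlockDetermined.exists_hasFreq (hQ : 1 < Q) (hx : IsBlockDetermined x Q)
    (hrec : ∀ t, ∃ r < Q, x (Q * t + r) = x 0) {m : ℕ} (w : Fin m → α) :
    ∃ φ, HasFreq (window x m) w φ := by
  refine exists_tendsto_count_div fun ε hε => ?_
  obtain ⟨k, hk⟩ := exists_mul_pow_le (Q := Q) (by exact_mod_cast hQ) m hε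
  obtain ⟨u, hu⟩ := hx.exists_blockCount_mem_Icc hQ hrec w k
  refine ⟨Q ^ k, by positivity, u, fun t => ?_⟩
  rw [abs_of_nonneg (sub_nonneg.2 (hu t).1), Nat.cast_pow]
  linarith [(hu t).2]

theorem IsBlockDetermined.hasPosWordFreqs (hQ : 1 < Q) (hx : IsBlockDetermined x Q)
    (hrec : ∀ t, ∃ r < Q, x (Q * t + r) = x 0) : HasPosWordFreqs x := by
  intro m w
  obtain ⟨φ, hφ⟩ := hx.exists_hasFreq hQ hrec w
  refine ⟨φ, hφ, ?_⟩
  rintro ⟨i, rfl⟩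
  obtain ⟨G, hG⟩ := hx.exists_window_eq hQ hrec m i
  exact pos_of_tendsto_count_div hφ hG

end BlockDetermined

section Substitution

variable {ζ : Bool → List Bool} {q : ℕ} {x : ℕ → Bool}

lemma apply_mul_add_of_substSeq_eq (hx : substSeq ζ q x = x) (t : ℕ) {r : ℕ} (hr : r < q) :
    x (q * t + r) = (ζ (x t)).getD r false := by
  have hdiv : (q * t + r) / q = t := by
    rw [Nat.mul_add_div (by omega), Nat.div_eq_of_lt hr, add_zero]
  have hmod : (q * t + r) % q = r := by rw [Nat.mul_add_mod, Nat.mod_eq_of_lt hr]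
  conv_lhs => rw [← hx, substSeq, hdiv, hmod]

lemma isBlockDetermined_of_substSeq_eq (hx : substSeq ζ q x = x) : IsBlockDetermined x q := by
  intro s t hst r hr
  rw [apply_mul_add_of_substSeq_eq hx s hr, apply_mul_add_of_substSeq_eq hx t hr, hst]

lemma substWord_eq_flatMap (w : List Bool) : substWord ζ w = w.flatMap ζ := by
  induction w with
  | nil => rfl
  | cons a w ih => rw [List.flatMap_cons, ← ih]; rfl

lemma flatMap_range'_mul (q s n : ℕ) :
    (List.range' s n).flatMap (fun t => List.range' (q * t) q) = List.range' (q * s) (q * n) := by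
  induction n generalizing s with
  | zero => simp
  | succ n ih =>
    rw [List.range'_succ, List.flatMap_cons, ih, mul_add_one, mul_add_one, List.range'_append_1,
      add_comm q]

lemma subst_apply_eq_map_range' (hζ : IsConstLenSubst ζ q) (hx : substSeq ζ q x = x) (t : ℕ) :
    ζ (x t) = (List.range' (q * t) q).map x := by
  refine List.ext_getElem (by simp [hζ.2]) fun r hr _ => ?_
  rw [List.getElem_map, List.getElem_range', one_mul,
    apply_mul_add_of_substSeq_eq hx t (by rwa [hζ.2] at hr), List.getD_eq_getElem _ _ hr]

lemma substWord_map_range' (hζ : IsConstLenSubst ζ q) (hx : substSeq ζ q x = x) (s n : ℕ) :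
    substWord ζ ((List.range' s n).map x) = (List.range' (q * s) (q * n)).map x := by
  rw [substWord_eq_flatMap, List.flatMap_map, ← flatMap_range'_mul, List.map_flatMap]
  simp only [subst_apply_eq_map_range' hζ hx]

lemma iterate_substWord_singleton (hζ : IsConstLenSubst ζ q) (hx : substSeq ζ q x = x)
    (k s : ℕ) : (substWord ζ)^[k] [x s] = (List.range' (q ^ k * s) (q ^ k)).map x := by
  induction k with
  | zero => simp
  | succ k ih =>
    rw [Function.iterate_succ_apply', ih, substWord_map_range' hζ hx, pow_succ', mul_assoc]

lemma IsPrimitive.exists_pow_block (hprim : IsPrimitive ζ) (hζ : IsConstLenSubst ζ q)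
    (hx : substSeq ζ q x = x) :
    ∃ K, 1 ≤ K ∧ ∀ t b, ∃ r < q ^ K, x (q ^ K * t + r) = b := by
  obtain ⟨K, hK, hmem⟩ := hprim
  refine ⟨K, hK, fun t b => ?_⟩
  have hb := hmem (x t) b
  rw [iterate_substWord_singleton hζ hx, List.mem_map] at hb
  obtain ⟨i, hi, rfl⟩ := hb
  rw [List.mem_range'_1] at hi
  exact ⟨i - q ^ K * t, by omega, by rw [Nat.add_sub_cancel' hi.1]⟩

theorem IsPrimitive.hasPosWordFreqs (hprim : IsPrimitive ζ) (hζ : IsConstLenSubst ζ q)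
    (hx : substSeq ζ q x = x) : HasPosWordFreqs x := by
  obtain ⟨K, hK, hblock⟩ := hprim.exists_pow_block hζ hx
  exact ((isBlockDetermined_of_substSeq_eq hx).pow K).hasPosWordFreqs
    (Nat.one_lt_pow (by omega) hζ.1) fun t => hblock t (x 0)

lemma IsPrimitive.exists_window_eq_of_mem_substShift (hprim : IsPrimitive ζ)
    (hζ : IsConstLenSubst ζ q) (hx : substSeq ζ q x = x) {y : ℕ → Bool} (hy : y ∈ SubstShift ζ)
    (n : ℕ) : ∃ c, ∀ h < n, y h = x (c + h) := by
  obtain ⟨a, k, -, hinfix⟩ := hy n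
  obtain ⟨K, -, hblock⟩ := hprim.exists_pow_block hζ hx
  obtain ⟨r, -, rfl⟩ := hblock 0 a
  rw [iterate_substWord_singleton hζ hx] at hinfix
  obtain ⟨c, hlen, hc⟩ := List.infix_iff_getElem?.1 hinfix
  refine ⟨q ^ k * (q ^ K * 0 + r) + c, fun h hh => ?_⟩
  rw [List.length_ofFn, List.length_map, List.length_range'] at hlen
  have hget := hc h (by simpa using hh)
  rw [List.getElem_ofFn, List.getElem?_map, List.getElem?_range' (by omega), Option.map_some,
    Option.some_inj] at hget
  rw [← hget, one_mul, add_assoc, add_comm c]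

theorem IsAperiodic.exists_add_ne (hap : IsAperiodic ζ) (hprim : IsPrimitive ζ)
    (hζ : IsConstLenSubst ζ q) (hx : substSeq ζ q x = x) {p : ℕ} (hp : 1 ≤ p) :
    ∃ i, x (i + p) ≠ x i := by
  obtain ⟨y, hy, hyper⟩ := hap
  obtain ⟨i, hi⟩ := hyper p hp
  obtain ⟨c, hc⟩ := hprim.exists_window_eq_of_mem_substShift hζ hx hy (i + p + 1)
  refine ⟨c + i, ?_⟩
  rwa [add_assoc, ← hc (i + p) (by omega), ← hc i (by omega)]

end Substitution

/-! ### Densities of the sets `K_l` -/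

section Density

variable {β : Type*} [DecidableEq β]

lemma ncard_relation_inter_square (f : ℕ → β) (R : Finset (β × β)) (n : ℕ) :
    ({p : ℕ × ℕ | (f p.1, f p.2) ∈ R} ∩ {p : ℕ × ℕ | p.1 < n ∧ p.2 < n}).ncard =
      ∑ b ∈ R, Nat.count (f · = b.1) n * Nat.count (f · = b.2) n := by
  set S : Finset (ℕ × ℕ) := {p ∈ Finset.range n ×ˢ Finset.range n | (f p.1, f p.2) ∈ R}
  have hS : {p : ℕ × ℕ | (f p.1, f p.2) ∈ R} ∩ {p : ℕ × ℕ | p.1 < n ∧ p.2 < n} = S := by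
    ext p
    simp [S, and_comm]
  have hfiber {b : β × β} (hb : b ∈ R) : {p ∈ S | (f p.1, f p.2) = b} =
      {i ∈ Finset.range n | f i = b.1} ×ˢ {i ∈ Finset.range n | f i = b.2} := by
    ext p
    simp only [S, Finset.mem_filter, Finset.mem_product, Prod.ext_iff]
    grind
  have hmaps : Set.MapsTo (fun p : ℕ × ℕ => (f p.1, f p.2)) S R :=
    fun p hp => (Finset.mem_filter.1 hp).2
  rw [hS, Set.ncard_coe_finset, Finset.card_eq_sum_card_fiberwise hmaps]
  refine Finset.sum_congr rfl fun b hb => ?_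
  rw [hfiber hb, Finset.card_product, Nat.count_eq_card_filter_range,
    Nat.count_eq_card_filter_range]

lemma hasDens_relation {f : ℕ → β} {φ : β → ℝ} (hφ : ∀ b, HasFreq f b (φ b)) (R : Finset (β × β)) :
    HasDens {p : ℕ × ℕ | (f p.1, f p.2) ∈ R} (∑ b ∈ R, φ b.1 * φ b.2) := by
  have hlim : Tendsto (fun n : ℕ => ∑ b ∈ R,
      (Nat.count (f · = b.1) n / n : ℝ) * (Nat.count (f · = b.2) n / n)) atTop
      (𝓝 (∑ b ∈ R, φ b.1 * φ b.2)) :=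
    tendsto_finsetSum R fun b _ => (hφ b.1).mul (hφ b.2)
  refine hlim.congr fun n => ?_
  rw [densCount, ncard_relation_inter_square, Nat.cast_sum, Finset.sum_div]
  refine Finset.sum_congr rfl fun b _ => ?_
  rw [div_mul_div_comm, Nat.cast_mul, sq]

lemma HasDens.image_succ {M : Set (ℕ × ℕ)} {a : ℝ} (hM : HasDens M a) :
    HasDens (Prod.map Nat.succ Nat.succ '' M) a := by
  have hcount (n : ℕ) : (Prod.map Nat.succ Nat.succ '' M ∩
        {p : ℕ × ℕ | p.1 < n + 1 ∧ p.2 < n + 1}).ncard =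
      (M ∩ {p : ℕ × ℕ | p.1 < n ∧ p.2 < n}).ncard := by
    have hpre : {p : ℕ × ℕ | p.1 < n ∧ p.2 < n} =
        Prod.map Nat.succ Nat.succ ⁻¹' {p : ℕ × ℕ | p.1 < n + 1 ∧ p.2 < n + 1} := by
      ext p
      simp
    rw [hpre, ← Set.image_inter_preimage,
      Set.ncard_image_of_injective _ (Nat.succ_injective.prodMap Nat.succ_injective)]
  have hratio : Tendsto (fun n : ℕ => ((n : ℝ) / (n + 1 : ℕ)) ^ 2) atTop (𝓝 (1 ^ 2)) := by
    exact_mod_cast (tendsto_natCast_div_add_atTop (1 : ℝ)).pow 2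
  refine (tendsto_add_atTop_iff_nat 1).1 ?_
  have hlim := hM.mul hratio
  rw [one_pow, mul_one] at hlim
  refine hlim.congr' ?_
  filter_upwards [eventually_ne_atTop 0] with n hn
  have hn' : (n : ℝ) ≠ 0 := by exact_mod_cast hn
  rw [densCount, densCount, hcount]
  field_simp

end Density

section InnerLines

variable {x : ℕ → Bool} {l : ℕ}

/-- The pairs of words `(a u b, a' u b')` with `|u| = l`, `a ≠ a'` and `b ≠ b'`; an inner line of
length `l` starts at `(i, j)` iff such a pair is read off at `(i - 1, j - 1)`. -/
def linePairs (l : ℕ) : Finset ((Fin (l + 2) → Bool) × (Fin (l + 2) → Bool)) :=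
  {w | w.1 0 ≠ w.2 0 ∧ (∀ h : Fin l, w.1 h.castSucc.succ = w.2 h.castSucc.succ) ∧
    w.1 (Fin.last (l + 1)) ≠ w.2 (Fin.last (l + 1))}

lemma succ_mem_Kset_iff (hl : 1 ≤ l) (i j : ℕ) :
    (i + 1, j + 1) ∈ Kset x l ↔ x i ≠ x j ∧
      (∀ h < l, x (i + 1 + h) = x (j + 1 + h)) ∧ x (i + 1 + l) ≠ x (j + 1 + l) := by
  simp only [Kset, IsInfLine, Set.mem_ofPred_eq]
  grind

lemma Kset_eq_image (hl : 1 ≤ l) : Kset x l = Prod.map Nat.succ Nat.succ ''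
    {p | (window x (l + 2) p.1, window x (l + 2) p.2) ∈ linePairs l} := by
  have hpairs (i j : ℕ) : (i + 1, j + 1) ∈ Kset x l ↔
      (window x (l + 2) i, window x (l + 2) j) ∈ linePairs l := by
    rw [succ_mem_Kset_iff hl]
    simp [linePairs, window, Fin.forall_iff, add_assoc, add_comm 1]
  ext ⟨i, j⟩
  constructor
  · intro hij
    obtain ⟨i, rfl⟩ := Nat.exists_eq_add_of_le' hij.1
    obtain ⟨j, rfl⟩ := Nat.exists_eq_add_of_le' hij.2.1
    exact ⟨(i, j), (hpairs i j).1 hij, rfl⟩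
  · rintro ⟨p, hp, hpij⟩
    rw [← hpij]
    exact (hpairs p.1 p.2).2 hp

theorem exists_hasDens_Kset (hx : HasPosWordFreqs x) (hl : 1 ≤ l) :
    ∃ d, HasDens (Kset x l) d ∧ ((Kset x l).Nonempty → 0 < d) := by
  choose φ hφ hpos using hx (l + 2)
  have hφ_nonneg (w : Fin (l + 2) → Bool) : 0 ≤ φ w :=
    ge_of_tendsto' (hφ w) fun n => by positivity
  refine ⟨∑ b ∈ linePairs l, φ b.1 * φ b.2, ?_, ?_⟩
  · rw [Kset_eq_image hl]
    exact (hasDens_relation hφ _).image_succ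
  · rw [Kset_eq_image hl]
    rintro ⟨_, p, hp, -⟩
    refine Finset.sum_pos' (fun b _ => mul_nonneg (hφ_nonneg _) (hφ_nonneg _)) ⟨_, hp, ?_⟩
    exact mul_pos (hpos _ ⟨_, rfl⟩) (hpos _ ⟨_, rfl⟩)

end InnerLines

/-! ### Long inner lines -/

section LongLines

variable {α : Type*} {x : ℕ → α} {L : ℕ}

lemma window_eq_of_window_add_eq
    (hdet : ∀ i j, window x L (i + 1) = window x L (j + 1) → x i = x j) (m : ℕ) {i j : ℕ}
    (hij : window x L (i + m) = window x L (j + m)) : window x (L + m) i = window x (L + m) j := by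
  induction m generalizing i j with
  | zero => exact hij
  | succ m ih =>
    have hnext : window x (L + m) (i + 1) = window x (L + m) (j + 1) :=
      ih (by rwa [add_assoc, add_assoc, add_comm 1])
    rw [window_eq_window_iff] at hnext
    have hfirst : x i = x j :=
      hdet i j (window_eq_window_iff.2 fun h hh => hnext h (by omega))
    refine window_eq_window_iff.2 fun h hh => ?_
    cases h with
    | zero => exact hfirst
    | succ h => simpa only [add_assoc, add_comm 1] using hnext h (by omega)

/-- If `L`-windows determined the preceding letter, then a repetition of an `L`-window at distance
`p` would propagate back to the origin, and by pigeonhole `p` is bounded independently of where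
the repetition is found. -/
lemma exists_leftSpecial [Finite α] (hper : ∀ p, 1 ≤ p → ∃ i, x (i + p) ≠ x i) (L : ℕ) :
    ∃ i j, x i ≠ x j ∧ window x L (i + 1) = window x L (j + 1) := by
  by_contra! hdet
  have : Fintype (Fin L → α) := Fintype.ofFinite _
  choose! bad hbad using hper
  set c := Fintype.card (Fin L → α)
  set M := (Finset.range (c + 1)).sup bad + 1
  obtain ⟨s, t, hne, hst⟩ := Fintype.exists_ne_map_eq_of_card_lt
    (fun s : Fin (c + 1) => window x L (s + M)) (by simp [c])
  wlog hlt : s < t generalizing s t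
  · exact this t s hne.symm hst.symm (lt_of_le_of_ne (not_lt.1 hlt) hne.symm)
  set p : ℕ := t - s
  have hp : 1 ≤ p ∧ p < c + 1 := ⟨Nat.sub_pos_of_lt hlt, (Nat.sub_le _ _).trans_lt t.2⟩
  have hperiod : window x (L + (s + M)) 0 = window x (L + (s + M)) p := by
    refine window_eq_of_window_add_eq (fun i j hw => not_not.1 fun hx => hdet i j hx hw) _ ?_
    rwa [zero_add, show p + (s + M) = t + M by omega]
  have hbadM : bad p < M := Nat.lt_succ_of_le (Finset.le_sup (Finset.mem_range.2 hp.2))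
  refine hbad p hp.1 ?_
  have hbad_eq := window_eq_window_iff.1 hperiod (bad p) (by omega)
  rw [add_comm, ← hbad_eq, zero_add]

lemma HasPosWordFreqs.exists_ge_add_ne [DecidableEq α] (hx : HasPosWordFreqs x) {p : ℕ}
    (hp : ∃ i, x (i + p) ≠ x i) (N : ℕ) : ∃ i, N ≤ i ∧ x (i + p) ≠ x i := by
  obtain ⟨i, hi⟩ := hp
  obtain ⟨φ, hφ, hpos⟩ := hx (p + 1) (window x (p + 1) i)
  obtain ⟨k, hk, hw⟩ := hφ.exists_ge_eq (hpos ⟨i, rfl⟩) N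
  rw [window_eq_window_iff] at hw
  refine ⟨k, hk, ?_⟩
  have hfirst : x k = x i := hw 0 p.succ_pos
  rwa [hw p p.lt_succ_self, hfirst]

end LongLines

theorem exists_Kset_nonempty {x : ℕ → Bool} (hx : HasPosWordFreqs x)
    (hper : ∀ p, 1 ≤ p → ∃ i, x (i + p) ≠ x i) {L : ℕ} (hL : 1 ≤ L) :
    ∃ l, L ≤ l ∧ (Kset x l).Nonempty := by
  obtain ⟨i, j, hne, hw⟩ := exists_leftSpecial hper L
  wlog hij : i < j generalizing i j
  · exact this j i hne.symm hw.symm (lt_of_le_of_ne (not_lt.1 hij) fun h => hne (by rw [h]))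
  rw [window_eq_window_iff] at hw
  have hdiff : ∃ h, x (i + 1 + h) ≠ x (j + 1 + h) := by
    obtain ⟨k, hk, hxk⟩ := hx.exists_ge_add_ne (hper (j - i) (by omega)) (i + 1)
    refine ⟨k - (i + 1), ?_⟩
    rw [show i + 1 + (k - (i + 1)) = k by omega, show j + 1 + (k - (i + 1)) = k + (j - i) by omega]
    exact hxk.symm
  have hlen : L ≤ Nat.find hdiff :=
    (Nat.le_find_iff hdiff L).2 fun h hh => not_not.2 (hw h hh)
  refine ⟨Nat.find hdiff, hlen, (i + 1, j + 1), (succ_mem_Kset_iff (hL.trans hlen) i j).2 ?_⟩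
  exact ⟨hne, fun h hh => not_not.1 (Nat.find_min hdiff hh), Nat.find_spec hdiff⟩

/-! ### Lines of finite recurrence plots -/

section Plot

variable {X : Type*} {d : X → X → ℝ} {f : X → X} {x : X} {n : ℕ} {ε : ℝ}

lemma IsLine.offset_le {i j l h i' j' l' h' : ℕ} (hline : IsLine d f x n ε i j l)
    (hline' : IsLine d f x n ε i' j' l') (hh' : h' < l') (hi : i + h = i' + h')
    (hj : j + h = j' + h') : h' ≤ h := by
  by_contra! hlt
  obtain ⟨-, -, -, -, -, hbefore, -⟩ := hline
  obtain ⟨-, -, -, -, hone', -⟩ := hline'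
  refine hbefore (by omega) (by omega) ?_
  have hone := hone' (h' - h - 1) (by omega)
  rwa [show i' + (h' - h - 1) = i - 1 by omega, show j' + (h' - h - 1) = j - 1 by omega] at hone

lemma IsLine.length_le {i j l l' : ℕ} (hline : IsLine d f x n ε i j l)
    (hline' : IsLine d f x n ε i j l') : l' ≤ l := by
  by_contra! hlt
  obtain ⟨-, hi', hj', -, hone', -⟩ := hline'
  exact hline.2.2.2.2.2.2 (by omega) (hone' l hlt)

lemma IsLine.eq_of_add_eq {i j l h i' j' l' h' : ℕ} (hline : IsLine d f x n ε i j l)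
    (hline' : IsLine d f x n ε i' j' l') (hh : h < l) (hh' : h' < l') (hi : i + h = i' + h')
    (hj : j + h = j' + h') : l = l' ∧ i = i' ∧ j = j' ∧ h = h' := by
  obtain rfl : h = h' :=
    (hline'.offset_le hline hh hi.symm hj.symm).antisymm (hline.offset_le hline' hh' hi hj)
  obtain rfl : i = i' := Nat.add_right_cancel hi
  obtain rfl : j = j' := Nat.add_right_cancel hj
  exact ⟨(hline'.length_le hline).antisymm (hline.length_le hline'), rfl, rfl, rfl⟩

lemma finite_setOf_isLine (d : X → X → ℝ) (f : X → X) (x : X) (n : ℕ) (ε : ℝ) (l : ℕ) :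
    {p : ℕ × ℕ | IsLine d f x n ε p.1 p.2 l}.Finite := by
  refine (Finset.range n ×ˢ Finset.range n).finite_toSet.subset ?_
  rintro p ⟨hl, hi, hj, -⟩
  rw [Finset.mem_coe, Finset.mem_product, Finset.mem_range, Finset.mem_range]
  omega

/-- Each recurrence off the main diagonal lies on at most one line. -/
lemma sum_mul_Nlines_le (d : X → X → ℝ) (f : X → X) (x : X) (n : ℕ) (ε : ℝ) (s : Finset ℕ) :
    ∑ l ∈ s, l * Nlines d f x n ε l ≤ n * n - n := by
  set cells : Finset (Σ _ : ℕ, (ℕ × ℕ) × ℕ) :=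
    s.sigma fun l => (finite_setOf_isLine d f x n ε l).toFinset ×ˢ Finset.range l
  have hmem {z : Σ _ : ℕ, (ℕ × ℕ) × ℕ} (hz : z ∈ cells) :
      IsLine d f x n ε z.2.1.1 z.2.1.2 z.1 ∧ z.2.2 < z.1 := by
    simpa using (Finset.mem_sigma.1 hz).2
  have hcells : ∑ l ∈ s, l * Nlines d f x n ε l = cells.card := by
    rw [Finset.card_sigma]
    refine Finset.sum_congr rfl fun l _ => ?_
    rw [Finset.card_product, Finset.card_range, mul_comm, Nlines,
      Set.ncard_eq_toFinset_card _ (finite_setOf_isLine d f x n ε l)]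
  have hoffDiag : n * n - n = (Finset.range n).offDiag.card := by
    rw [Finset.offDiag_card, Finset.card_range]
  rw [hcells, hoffDiag]
  refine Finset.card_le_card_of_injOn (fun z => (z.2.1.1 + z.2.2, z.2.1.2 + z.2.2)) ?_ ?_
  · intro z hz
    obtain ⟨⟨-, hi, hj, hij, -⟩, hh⟩ := hmem hz
    simp only [Finset.mem_coe, Finset.mem_offDiag, Finset.mem_range]
    omega
  · rintro ⟨l, ⟨i, j⟩, h⟩ hz ⟨l', ⟨i', j'⟩, h'⟩ hz' heq
    obtain ⟨hi, hj⟩ := Prod.mk.inj heq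
    obtain ⟨rfl, rfl, rfl, rfl⟩ :=
      (hmem hz).1.eq_of_add_eq (hmem hz').1 (hmem hz).2 (hmem hz').2 hi hj
    rfl

lemma natCast_sq_sub_nonneg (n : ℕ) : (0 : ℝ) ≤ (n : ℝ) ^ 2 - n := by
  rw [sub_nonneg]
  exact_mod_cast Nat.le_self_pow two_ne_zero n

lemma Pline_nonneg (d : X → X → ℝ) (f : X → X) (x : X) (n : ℕ) (ε : ℝ) (l : ℕ) :
    0 ≤ Pline d f x n ε l :=
  div_nonneg (Nat.cast_nonneg _) (natCast_sq_sub_nonneg n)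

lemma sum_mul_Pline_le_one (d : X → X → ℝ) (f : X → X) (x : X) (n : ℕ) (ε : ℝ) (s : Finset ℕ) :
    ∑ l ∈ s, (l : ℝ) * Pline d f x n ε l ≤ 1 := by
  have hsum : ∑ l ∈ s, (l : ℝ) * Nlines d f x n ε l ≤ (n : ℝ) ^ 2 - n := by
    rw [sq, ← Nat.cast_mul, ← Nat.cast_sub (Nat.le_mul_self n)]
    exact_mod_cast sum_mul_Nlines_le d f x n ε s
  simp only [Pline, ← mul_div_assoc]
  rw [← Finset.sum_div]
  exact div_le_one_of_le₀ hsum (natCast_sq_sub_nonneg n)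

end Plot

section SymbolicPlot

variable {α : Type*}

lemma iterate_shift_apply (x : ℕ → α) (i h : ℕ) : (shift^[i] x) h = x (i + h) := by
  induction i generalizing h with
  | zero => rw [Function.iterate_zero_apply, zero_add]
  | succ i ih => rw [Function.iterate_succ_apply', shift, ih, add_assoc, add_comm 1]

lemma seqDist_le_half_iff (y z : ℕ → α) : seqDist y z ≤ 1 / 2 ↔ y 0 = z 0 := by
  by_cases hyz : y = z
  · simp [seqDist, hyz]
  rw [seqDist, if_neg hyz, one_div, ← zpow_neg_one, zpow_le_zpow_iff_right₀ one_lt_two,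
    neg_le_neg_iff, Nat.one_le_cast, Nat.one_le_iff_ne_zero, Ne, Nat.sInf_eq_zero]
  have hne : {i | y i ≠ z i} ≠ ∅ :=
    Set.nonempty_iff_ne_empty.1 (Function.ne_iff.1 hyz)
  simp [hne]

lemma RPone_seqDist_iff (x : ℕ → α) (i j : ℕ) :
    RPone seqDist shift x (1 / 2) i j ↔ x i = x j := by
  rw [RPone, seqDist_le_half_iff, iterate_shift_apply, iterate_shift_apply, add_zero, add_zero]

lemma isLine_iff_mem_Kset (x : ℕ → Bool) {n i j l : ℕ} (hi : i ∈ Finset.Ico 1 (n - l))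
    (hj : j ∈ Finset.Ico 1 (n - l)) :
    IsLine seqDist shift x n (1 / 2) i j l ↔ (i, j) ∈ Kset x l := by
  rw [Finset.mem_Ico] at hi hj
  simp only [IsLine, Kset, IsInfLine, RPone_seqDist_iff, Set.mem_ofPred_eq]
  have hin : i + l ≤ n ∧ j + l ≤ n ∧ max i j + l < n := by omega
  simp only [hi.1, hj.1, hin, true_and, forall_const, ne_eq]

lemma abs_ncard_sub_ncard_le {γ : Type*} {A B : Set γ} (hA : A.Finite) (hB : B.Finite)
    {E : Finset γ} (hAB : ∀ p ∉ E, p ∈ A ↔ p ∈ B) : |(A.ncard : ℝ) - B.ncard| ≤ E.card := by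
  have hle {A B : Set γ} (hB : B.Finite) (hAB : ∀ p ∉ E, p ∈ A → p ∈ B) :
      (A.ncard : ℝ) ≤ E.card + B.ncard := by
    have hsub : A ⊆ E ∪ B := fun p hp => or_iff_not_imp_left.2 fun hE => hAB p hE hp
    have hncard := (Set.ncard_le_ncard hsub (E.finite_toSet.union hB)).trans
      (Set.ncard_union_le _ _)
    rw [Set.ncard_coe_finset] at hncard
    exact_mod_cast hncard
  rw [abs_sub_le_iff, sub_le_iff_le_add, sub_le_iff_le_add]
  exact ⟨hle hB fun p hp => (hAB p hp).1, hle hA fun p hp => (hAB p hp).2⟩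

lemma card_frame_le (n l : ℕ) :
    ((Finset.range n ×ˢ Finset.range n) \
      (Finset.Ico 1 (n - l) ×ˢ Finset.Ico 1 (n - l))).card ≤ 2 * (l + 1) * n := by
  have hsub : Finset.Ico 1 (n - l) ⊆ Finset.range n := by
    intro i hi
    rw [Finset.mem_Ico] at hi
    exact Finset.mem_range.2 (by omega)
  rw [Finset.card_sdiff_of_subset (Finset.product_subset_product hsub hsub), Finset.card_product,
    Finset.card_product, Finset.card_range, Nat.card_Ico]
  obtain ⟨c, hc⟩ : ∃ c, c = n - l - 1 := ⟨_, rfl⟩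
  rw [← hc, Nat.mul_self_sub_mul_self_eq]
  calc (n + c) * (n - c) ≤ (n + n) * (l + 1) := Nat.mul_le_mul (by omega) (by omega)
    _ = 2 * (l + 1) * n := by ring

lemma abs_Nlines_sub_ncard_Kset_le (x : ℕ → Bool) (n l : ℕ) :
    |(Nlines seqDist shift x n (1 / 2) l : ℝ) -
      (Kset x l ∩ {p : ℕ × ℕ | p.1 < n ∧ p.2 < n}).ncard| ≤ 2 * (l + 1) * n := by
  have hfinite : (Kset x l ∩ {p : ℕ × ℕ | p.1 < n ∧ p.2 < n}).Finite :=
    (Finset.range n ×ˢ Finset.range n).finite_toSet.subset fun p hp => by simpa using hp.2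
  refine (abs_ncard_sub_ncard_le (finite_setOf_isLine ..) hfinite
    (E := (Finset.range n ×ˢ Finset.range n) \ (Finset.Ico 1 (n - l) ×ˢ Finset.Ico 1 (n - l)))
    ?_).trans (by exact_mod_cast card_frame_le n l)
  rintro ⟨i, j⟩ hp
  rw [Finset.mem_sdiff, not_and_not_right, Finset.mem_product, Finset.mem_product,
    Finset.mem_range, Finset.mem_range] at hp
  by_cases hij : i < n ∧ j < n
  · exact (isLine_iff_mem_Kset x (hp hij).1 (hp hij).2).trans (and_iff_left hij).symm
  · refine iff_of_false ?_ fun hK => hij hK.2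
    rintro ⟨hl, hi, hj, -⟩
    exact hij ⟨by omega, by omega⟩

theorem tendsto_Pline {x : ℕ → Bool} {l : ℕ} {a : ℝ} (ha : HasDens (Kset x l) a) :
    Tendsto (fun n : ℕ => Pline seqDist shift x n (1 / 2) l) atTop (𝓝 a) := by
  have hdiff : Tendsto (fun n : ℕ => (Nlines seqDist shift x n (1 / 2) l : ℝ) / (n : ℝ) ^ 2 -
      densCount (Kset x l) n) atTop (𝓝 0) := by
    refine squeeze_zero_norm (fun n => ?_) (tendsto_const_div_atTop_nhds_zero_nat (2 * (l + 1 : ℝ)))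
    rw [densCount, ← sub_div, Real.norm_eq_abs, abs_div, abs_of_nonneg (sq_nonneg (n : ℝ))]
    calc _ ≤ 2 * (l + 1) * n / (n : ℝ) ^ 2 := by
          gcongr
          exact abs_Nlines_sub_ncard_Kset_le x n l
      _ = 2 * (l + 1) / (n : ℝ) := by field_simp
  have hratio : Tendsto (fun n : ℕ => (1 - 1 / (n : ℝ))⁻¹) atTop (𝓝 1) := by
    simpa using (tendsto_const_nhds.sub (tendsto_const_div_atTop_nhds_zero_nat (1 : ℝ))).inv₀
      (by norm_num : (1 : ℝ) - 0 ≠ 0)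
  have hlim := (hdiff.add ha).mul hratio
  rw [zero_add, mul_one] at hlim
  refine hlim.congr' ?_
  filter_upwards [eventually_ne_atTop 0] with n hn
  have hn' : (n : ℝ) ≠ 0 := by exact_mod_cast hn
  rw [sub_add_cancel, Pline, ← div_eq_mul_inv, div_div, mul_sub, mul_one, sq,
    mul_one_div, mul_div_cancel_right₀ _ hn']

end SymbolicPlot

/-! ### Limits of entropies -/

section Tightness

variable {ι : Type*} {w : ι → ℝ} {C : ℝ}

lemma sum_subtype_le_div_of_weighted_sum_le {f : ι → ℝ} (hf : ∀ k, 0 ≤ f k)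
    (hsum : ∀ s : Finset ι, ∑ k ∈ s, w k * f k ≤ C) {W : ℝ} (hW : 0 < W) {T : Set ι}
    (hT : ∀ k ∈ T, W ≤ w k) (s : Finset T) : ∑ k ∈ s, f k ≤ C / W := by
  rw [le_div_iff₀' hW, Finset.mul_sum]
  calc ∑ k ∈ s, W * f k ≤ ∑ k ∈ s, w k * f k :=
        Finset.sum_le_sum fun k _ => mul_le_mul_of_nonneg_right (hT k k.2) (hf k)
    _ = ∑ k ∈ s.map (.subtype (· ∈ T)), w k * f k := by
        rw [Finset.sum_map, Function.Embedding.coe_subtype]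
    _ ≤ C := hsum _

lemma summable_of_weighted_sum_le {f : ι → ℝ} (hf : ∀ k, 0 ≤ f k)
    (hw : Tendsto w cofinite atTop) (hsum : ∀ s : Finset ι, ∑ k ∈ s, w k * f k ≤ C) :
    Summable f := by
  have hfin : {k | ¬ 1 ≤ w k}.Finite := hw.eventually_ge_atTop 1
  rw [← hfin.summable_compl_iff]
  exact summable_of_sum_le (fun k => hf k)
    (sum_subtype_le_div_of_weighted_sum_le hf hsum one_pos fun k hk => not_not.1 hk)

/-- The weighted bound makes the family uniformly tight, so the partial sums converge uniformly. -/
lemma tendsto_tsum_of_weighted_sum_le {κ : Type*} {F : Filter κ} {a : κ → ι → ℝ} {A : ι → ℝ}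
    (ha : ∀ n k, 0 ≤ a n k) (hw : Tendsto w cofinite atTop)
    (hsum : ∀ n (s : Finset ι), ∑ k ∈ s, w k * a n k ≤ C)
    (hlim : ∀ k, Tendsto (fun n => a n k) F (𝓝 (A k))) (hA : Summable A) :
    Tendsto (fun n => ∑' k, a n k) F (𝓝 (∑' k, A k)) := by
  have hunif : TendstoUniformly (fun (s : Finset ι) n => ∑ k ∈ s, a n k) (fun n => ∑' k, a n k)
      atTop := by
    rw [Metric.tendstoUniformly_iff]
    intro ε hε
    obtain ⟨W, hW, hCW⟩ : ∃ W : ℝ, 0 < W ∧ C / W < ε := by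
      have hsmall : Tendsto (fun W : ℝ => C / W) atTop (𝓝 0) := tendsto_id.const_div_atTop C
      exact ((eventually_gt_atTop 0).and (hsmall.eventually_lt_const hε)).exists
    have hfin : {k | ¬ W ≤ w k}.Finite := hw.eventually_ge_atTop W
    filter_upwards [eventually_ge_atTop hfin.toFinset] with s hs n
    have htail : ∀ k ∈ (s : Set ι)ᶜ, W ≤ w k := fun k hk =>
      not_not.1 fun hlt => hk (hs (hfin.mem_toFinset.2 hlt))
    have hsummable := summable_of_weighted_sum_le (ha n) hw (hsum n)
    rw [Real.dist_eq, ← hsummable.sum_add_tsum_compl (s := s), add_sub_cancel_left,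
      abs_of_nonneg (tsum_nonneg fun k : ↑(s : Set ι)ᶜ => ha n k)]
    exact (Real.tsum_le_of_sum_le (fun k : ↑(s : Set ι)ᶜ => ha n k)
      (sum_subtype_le_div_of_weighted_sum_le (ha n) (hsum n) hW htail)).trans_lt hCW
  exact hunif.tendsto_of_eventually_tendsto
    (Eventually.of_forall fun s => tendsto_finsetSum s fun k _ => hlim k) hA.hasSum

end Tightness

section NormalizedEntropy

variable {ι : Type*}

/-- The Shannon entropy of the probability vector `d / ∑ d`, written in terms of the unnormalized
weights `d`. -/
noncomputable def normalizedEntropy (d : ι → ℝ) : ℝ :=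
  Real.log (∑' k, d k) - (∑' k, d k)⁻¹ * ∑' k, d k * Real.log (d k)

lemma normalizedEntropy_pos {d : ι → ℝ} (hd : ∀ k, 0 ≤ d k) (hsum : Summable d)
    (hlog : Summable fun k => d k * Real.log (d k)) {a b : ι} (hab : a ≠ b) (ha : 0 < d a)
    (hb : 0 < d b) : 0 < normalizedEntropy d := by
  set D := ∑' k, d k with hD
  have hDpos : 0 < D := hsum.tsum_pos hd a ha
  have hle (k : ι) : d k ≤ D := hsum.le_tsum k fun j _ => hd j
  have hlt : d a < D := by
    classical
    have hpair := hsum.sum_le_tsum {a, b} fun j _ => hd j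
    rw [Finset.sum_pair hab] at hpair
    linarith
  have hsummable : Summable fun k => d k * (Real.log D - Real.log (d k)) := by
    simpa only [mul_sub] using (hsum.mul_right _).sub hlog
  have hpos : 0 < ∑' k, d k * (Real.log D - Real.log (d k)) := by
    refine hsummable.tsum_pos (fun k => ?_) a (mul_pos ha (sub_pos.2 (Real.log_lt_log ha hlt)))
    rcases (hd k).eq_or_lt with hzero | hk
    · rw [← hzero, zero_mul]
    · exact mul_nonneg hk.le (sub_nonneg.2 (Real.log_le_log hk (hle k)))
  have hentropy : normalizedEntropy d = D⁻¹ * ∑' k, d k * (Real.log D - Real.log (d k)) := by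
    simp only [mul_sub]
    rw [(hsum.mul_right _).tsum_sub hlog, tsum_mul_right, normalizedEntropy, ← hD, mul_sub,
      inv_mul_cancel_left₀ hDpos.ne']
  rw [hentropy]
  positivity

lemma tendsto_normalizedEntropy_of_tendsto_tsum {κ : Type*} {F : Filter κ} {a : κ → ι → ℝ}
    {A : ι → ℝ}
    (hsum : Tendsto (fun n => ∑' k, a n k) F (𝓝 (∑' k, A k)))
    (hlog : Tendsto (fun n => ∑' k, Real.negMulLog (a n k)) F (𝓝 (∑' k, Real.negMulLog (A k))))
    (hA : ∑' k, A k ≠ 0) :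
    Tendsto (fun n => normalizedEntropy (a n)) F (𝓝 (normalizedEntropy A)) := by
  have hneg (d : ι → ℝ) : ∑' k, d k * Real.log (d k) = -∑' k, Real.negMulLog (d k) := by
    simp only [Real.negMulLog_eq_neg, tsum_neg, neg_neg]
  simp only [normalizedEntropy, hneg]
  exact (hsum.log hA).sub ((hsum.inv₀ hA).mul hlog.neg)

end NormalizedEntropy

section LineDistribution

lemma negMulLog_le_of_pos {p t : ℝ} (hp : 0 ≤ p) (ht : 0 < t) :
    Real.negMulLog p ≤ 2 * p * Real.log t + 1 / t ^ 2 := by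
  rcases hp.eq_or_lt with rfl | hp
  · rw [Real.negMulLog_zero, mul_zero, zero_mul, zero_add]
    positivity
  have hlog := mul_le_mul_of_nonneg_left
    (Real.log_le_sub_one_of_pos (show 0 < 1 / (p * t ^ 2) by positivity)) hp.le
  rw [one_div, Real.log_inv, Real.log_mul hp.ne' (by positivity), Real.log_pow] at hlog
  have hcancel : p * ((p * t ^ 2)⁻¹ - 1) = 1 / t ^ 2 - p := by field_simp
  rw [hcancel] at hlog
  push_cast at hlog
  rw [Real.negMulLog]
  linarith

lemma sqrt_mul_negMulLog_le {p t : ℝ} (hp : 0 ≤ p) (ht : 0 < t) :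
    √t * Real.negMulLog p ≤ 4 * (t * p) + t ^ (-(3 / 2) : ℝ) := by
  have hlog : Real.log t ≤ 2 * √t := by
    have hsqrt := Real.log_le_self (Real.sqrt_nonneg t)
    rw [Real.log_sqrt ht.le] at hsqrt
    linarith
  have hrpow : √t * (1 / t ^ 2) = t ^ (-(3 / 2) : ℝ) := by
    rw [Real.sqrt_eq_rpow, one_div (t ^ 2), ← Real.rpow_natCast, ← Real.rpow_neg ht.le,
      ← Real.rpow_add ht]
    norm_num
  calc √t * Real.negMulLog p ≤ √t * (2 * p * Real.log t + 1 / t ^ 2) := by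
        gcongr
        exact negMulLog_le_of_pos hp ht
    _ = √t * (2 * p * Real.log t) + t ^ (-(3 / 2) : ℝ) := by rw [mul_add, hrpow]
    _ ≤ √t * (2 * p * (2 * √t)) + t ^ (-(3 / 2) : ℝ) := by gcongr
    _ = 4 * (√t * √t * p) + t ^ (-(3 / 2) : ℝ) := by ring
    _ = _ := by rw [Real.mul_self_sqrt ht.le]

/-- `p k` can be the density of the lines of length `ℓ + k` in a recurrence plot: each such line
covers `ℓ + k` cells, and altogether at most all cells are covered. -/
structure IsLineDistribution (ℓ : ℕ) (p : ℕ → ℝ) : Prop where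
  nonneg : ∀ k, 0 ≤ p k
  weighted_sum_le : ∀ s : Finset ℕ, ∑ k ∈ s, ((ℓ + k : ℕ) : ℝ) * p k ≤ 1

lemma isLineDistribution_Pline {X : Type*} (d : X → X → ℝ) (f : X → X) (x : X) (n : ℕ) (ε : ℝ)
    (ℓ : ℕ) : IsLineDistribution ℓ fun k => Pline d f x n ε (ℓ + k) where
  nonneg k := Pline_nonneg d f x n ε (ℓ + k)
  weighted_sum_le s := by
    simpa only [Finset.sum_map, addLeftEmbedding_apply] using
      sum_mul_Pline_le_one d f x n ε (s.map (addLeftEmbedding ℓ))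

variable {ℓ : ℕ} {p : ℕ → ℝ}

lemma IsLineDistribution.of_tendsto {κ : Type*} {F : Filter κ} [F.NeBot] {a : κ → ℕ → ℝ}
    (ha : ∀ n, IsLineDistribution ℓ (a n)) (hlim : ∀ k, Tendsto (fun n => a n k) F (𝓝 (p k))) :
    IsLineDistribution ℓ p where
  nonneg k := ge_of_tendsto' (hlim k) fun n => (ha n).nonneg k
  weighted_sum_le s := le_of_tendsto' (tendsto_finsetSum s fun k _ => (hlim k).const_mul _)
    fun n => (ha n).weighted_sum_le s

lemma tendsto_natCast_add_cofinite (ℓ : ℕ) :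
    Tendsto (fun k : ℕ => ((ℓ + k : ℕ) : ℝ)) cofinite atTop := by
  simp only [Nat.cofinite_eq_atTop, add_comm ℓ]
  exact tendsto_natCast_atTop_atTop.comp (tendsto_add_atTop_nat ℓ)

lemma IsLineDistribution.summable (hp : IsLineDistribution ℓ p) : Summable p :=
  summable_of_weighted_sum_le hp.nonneg (tendsto_natCast_add_cofinite ℓ) hp.weighted_sum_le

lemma IsLineDistribution.negMulLog_nonneg (hp : IsLineDistribution ℓ p) (hℓ : 1 ≤ ℓ) (k : ℕ) :
    0 ≤ Real.negMulLog (p k) := by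
  have hle : ((ℓ + k : ℕ) : ℝ) * p k ≤ 1 := by simpa using hp.weighted_sum_le {k}
  have hweight : (1 : ℝ) ≤ (ℓ + k : ℕ) := by exact_mod_cast hℓ.trans (Nat.le_add_right ℓ k)
  exact Real.negMulLog_nonneg (hp.nonneg k)
    ((le_mul_of_one_le_left (hp.nonneg k) hweight).trans hle)

lemma IsLineDistribution.sum_sqrt_mul_negMulLog_le (hp : IsLineDistribution ℓ p) (hℓ : 1 ≤ ℓ)
    (s : Finset ℕ) : ∑ k ∈ s, √((ℓ + k : ℕ) : ℝ) * Real.negMulLog (p k) ≤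
      4 + ∑' k : ℕ, ((ℓ + k : ℕ) : ℝ) ^ (-(3 / 2) : ℝ) := by
  have hsummable : Summable fun k : ℕ => ((ℓ + k : ℕ) : ℝ) ^ (-(3 / 2) : ℝ) := by
    simp only [add_comm ℓ]
    exact (summable_nat_add_iff ℓ).2 (Real.summable_nat_rpow.2 (by norm_num))
  calc _ ≤ ∑ k ∈ s, (4 * (((ℓ + k : ℕ) : ℝ) * p k) + ((ℓ + k : ℕ) : ℝ) ^ (-(3 / 2) : ℝ)) :=
        Finset.sum_le_sum fun k _ =>
          sqrt_mul_negMulLog_le (hp.nonneg k) (by exact_mod_cast Nat.add_pos_left hℓ k)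
    _ = 4 * ∑ k ∈ s, ((ℓ + k : ℕ) : ℝ) * p k + ∑ k ∈ s, ((ℓ + k : ℕ) : ℝ) ^ (-(3 / 2) : ℝ) := by
        rw [Finset.sum_add_distrib, Finset.mul_sum]
    _ ≤ 4 * 1 + ∑' k : ℕ, ((ℓ + k : ℕ) : ℝ) ^ (-(3 / 2) : ℝ) := by
        gcongr
        · exact hp.weighted_sum_le s
        · exact hsummable.sum_le_tsum s fun k _ => by positivity
    _ = _ := by rw [mul_one]

lemma IsLineDistribution.summable_negMulLog (hp : IsLineDistribution ℓ p) (hℓ : 1 ≤ ℓ) :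
    Summable fun k => Real.negMulLog (p k) :=
  summable_of_weighted_sum_le (hp.negMulLog_nonneg hℓ)
    (Real.tendsto_sqrt_atTop.comp (tendsto_natCast_add_cofinite ℓ))
    (hp.sum_sqrt_mul_negMulLog_le hℓ)

theorem IsLineDistribution.tendsto_normalizedEntropy {κ : Type*} {F : Filter κ}
    {a : κ → ℕ → ℝ} (hℓ : 1 ≤ ℓ) (ha : ∀ n, IsLineDistribution ℓ (a n))
    (hp : IsLineDistribution ℓ p) (hlim : ∀ k, Tendsto (fun n => a n k) F (𝓝 (p k)))
    (hne : ∑' k, p k ≠ 0) :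
    Tendsto (fun n => normalizedEntropy (a n)) F (𝓝 (normalizedEntropy p)) := by
  refine tendsto_normalizedEntropy_of_tendsto_tsum ?_ ?_ hne
  · exact tendsto_tsum_of_weighted_sum_le (fun n => (ha n).nonneg)
      (tendsto_natCast_add_cofinite ℓ) (fun n => (ha n).weighted_sum_le) hlim hp.summable
  · exact tendsto_tsum_of_weighted_sum_le (fun n => (ha n).negMulLog_nonneg hℓ)
      (Real.tendsto_sqrt_atTop.comp (tendsto_natCast_add_cofinite ℓ))
      (fun n => (ha n).sum_sqrt_mul_negMulLog_le hℓ)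
      (fun k => (Real.continuous_negMulLog.tendsto _).comp (hlim k)) (hp.summable_negMulLog hℓ)

end LineDistribution

end RQA

theorem ENT_eq_densK_general {x : ℕ → Bool} (hx : HasPosWordFreqs x)
    (hper : ∀ p, 1 ≤ p → ∃ i, x (i + p) ≠ x i) {ℓ : ℕ} (hℓ : 1 ≤ ℓ) :
    ∃ dK : ℕ → ℝ,
      (∀ l, 1 ≤ l → HasDens (Kset x l) (dK l)) ∧
      Summable (fun k => dK (ℓ + k)) ∧
      Summable (fun k => dK (ℓ + k) * Real.log (dK (ℓ + k))) ∧
      0 < normalizedEntropy (fun k => dK (ℓ + k)) ∧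
      Tendsto (fun n => ENTln seqDist shift x n (1 / 2) ℓ) atTop
        (𝓝 (normalizedEntropy fun k => dK (ℓ + k))) := by
  choose! dK hdens hpos using fun l (hl : 1 ≤ l) => exists_hasDens_Kset hx hl
  have hlim (k : ℕ) : Tendsto (fun n => Pline seqDist shift x n (1 / 2) (ℓ + k)) atTop
      (𝓝 (dK (ℓ + k))) :=
    tendsto_Pline (hdens _ (Nat.le_add_right_of_le hℓ))
  have hPline (n : ℕ) := isLineDistribution_Pline seqDist shift x n (1 / 2) ℓ
  have hdist : IsLineDistribution ℓ fun k => dK (ℓ + k) := .of_tendsto hPline hlim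
  have hlong {L : ℕ} (hL : ℓ ≤ L) : ∃ k, L ≤ ℓ + k ∧ 0 < dK (ℓ + k) := by
    obtain ⟨l, hl, hne⟩ := exists_Kset_nonempty hx hper (hℓ.trans hL)
    obtain ⟨k, rfl⟩ := Nat.exists_eq_add_of_le (hL.trans hl)
    exact ⟨k, hl, hpos _ (by omega) hne⟩
  obtain ⟨a, -, ha⟩ := hlong le_rfl
  obtain ⟨b, hab, hb⟩ := hlong (L := ℓ + a + 1) (by omega)
  have hlog : Summable fun k => dK (ℓ + k) * Real.log (dK (ℓ + k)) := by
    simpa only [Real.negMulLog_eq_neg, neg_neg] using (hdist.summable_negMulLog hℓ).neg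
  exact ⟨dK, hdens, hdist.summable, hlog,
    normalizedEntropy_pos hdist.nonneg hdist.summable hlog (by omega : a ≠ b) ha hb,
    hdist.tendsto_normalizedEntropy hℓ hPline hlim
      (hdist.summable.tsum_pos hdist.nonneg a ha).ne'⟩

/-- the asymptotic entropy of line lengths exists and
ENT_ℓ(x,∞,ε₀) = log(Σ_{l≥ℓ} dens(K_l)) − (Σ_{l≥ℓ} dens(K_l))⁻¹·Σ_{l≥ℓ} dens(K_l)·log dens(K_l) > 0. -/
theorem ENT_eq_densK
    (ζ : Bool → List Bool) (q : ℕ) (hζ : IsConstLenSubst ζ q)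
    (hprim : IsPrimitive ζ) (hap : IsAperiodic ζ)
    (hζ0 : (ζ false).head? = some false)
    (x : ℕ → Bool) (hx0 : x 0 = false) (hxfix : substSeq ζ q x = x)
    (ℓ : ℕ) (hℓ : 1 ≤ ℓ) :
    ∃ dK : ℕ → ℝ,
      (∀ l : ℕ, 1 ≤ l → HasDens (Kset x l) (dK l)) ∧
      Summable (fun k : ℕ => dK (ℓ + k)) ∧
      Summable (fun k : ℕ => dK (ℓ + k) * Real.log (dK (ℓ + k))) ∧
      0 < Real.log (∑' k : ℕ, dK (ℓ + k)) -
          (∑' k : ℕ, dK (ℓ + k))⁻¹ * ∑' k : ℕ, dK (ℓ + k) * Real.log (dK (ℓ + k)) ∧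
      Tendsto (fun n : ℕ => ENTln seqDist shift x n (1/2 : ℝ) ℓ) atTop
        (𝓝 (Real.log (∑' k : ℕ, dK (ℓ + k)) -
          (∑' k : ℕ, dK (ℓ + k))⁻¹ * ∑' k : ℕ, dK (ℓ + k) * Real.log (dK (ℓ + k)))) := by
  exact ENT_eq_densK_general (hprim.hasPosWordFreqs hζ hxfix)
    (fun _ hp => hap.exists_add_ne hprim hζ hxfix hp) hℓ
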